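/- Let n and N be positive integers and let δ > 0. Then the series ∑_S e^{-δπ·Tr(S)}, where the sum runs over all positive semidefinite symmetric n×n matrices S with all entries in (1/N)·ℤ, converges to a finite value. Formally: the function T ↦ exp(-δ·π·Tr(T)/N) is summable over the set of symmetric positive semidefinite n×n matrices T with integer entries. -/

import Mathlib

open Matrix Real

/-!
A principal `2 × 2` minor of a positive semidefinite matrix `A` is nonnegative, so by AM-GM
`2‖A i j‖ ≤ A i i + A j j`; summing over `i` and `j`, the entrywise `ℓ¹` norm of an `n × n` matrix
`A` is at most `n · Tr A`. Hence the series is dominated by the sum of `exp (-b ∑ |T i j|)` over all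
integer matrices `T`, for some `b > 0`, which is a product of `n²` copies of the convergent series
`∑ k : ℤ, exp (-b |k|)`.
-/

section PosSemidef

open scoped ComplexOrder

variable {ι 𝕜 : Type*} [RCLike 𝕜] {A : Matrix ι ι 𝕜}

lemma norm_apply_sq_le_of_posSemidef (hA : A.PosSemidef) (i j : ι) :
    ‖A i j‖ ^ 2 ≤ RCLike.re (A i i) * RCLike.re (A j j) := by
  have minor_nonneg : 0 ≤ A i i * A j j - A i j * A j i :=
    (hA.submatrix ![i, j]).det_nonneg.trans_eq (det_fin_two _)
  have diag_im (k : ι) : RCLike.im (A k k) = 0 :=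
    (RCLike.nonneg_iff.mp hA.diag_nonneg).2
  have offDiag : A i j * A j i = (‖A i j‖ ^ 2 : ℝ) := by
    rw [← hA.isHermitian.apply j i, RCLike.star_def, RCLike.mul_conj, RCLike.ofReal_pow]
  have re_minor_nonneg := (RCLike.nonneg_iff.mp minor_nonneg).1
  rw [map_sub, offDiag, RCLike.ofReal_re, RCLike.mul_re, diag_im, zero_mul, sub_zero]
    at re_minor_nonneg
  exact sub_nonneg.mp re_minor_nonneg

lemma two_mul_norm_apply_le_of_posSemidef (hA : A.PosSemidef) (i j : ι) :
    2 * ‖A i j‖ ≤ RCLike.re (A i i) + RCLike.re (A j j) := by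
  have diag_re_nonneg (k : ι) : 0 ≤ RCLike.re (A k k) :=
    (RCLike.nonneg_iff.mp hA.diag_nonneg).1
  refine le_of_sq_le_sq ?_ (add_nonneg (diag_re_nonneg i) (diag_re_nonneg j))
  calc (2 * ‖A i j‖) ^ 2 = 4 * ‖A i j‖ ^ 2 := by ring
    _ ≤ 4 * (RCLike.re (A i i) * RCLike.re (A j j)) := by
      gcongr
      exact norm_apply_sq_le_of_posSemidef hA i j
    _ ≤ (RCLike.re (A i i) + RCLike.re (A j j)) ^ 2 := by
      linarith [four_mul_le_sq_add (RCLike.re (A i i)) (RCLike.re (A j j))]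

lemma sum_norm_le_card_mul_re_trace_of_posSemidef [Fintype ι] (hA : A.PosSemidef) :
    ∑ i, ∑ j, ‖A i j‖ ≤ Fintype.card ι * RCLike.re A.trace := by
  have sum_diag : ∑ i, ∑ j, (RCLike.re (A i i) + RCLike.re (A j j)) =
      2 * (Fintype.card ι * RCLike.re A.trace) := by
    simp [Finset.sum_add_distrib, ← Finset.mul_sum, trace, two_mul]
  refine le_of_mul_le_mul_left ?_ (zero_lt_two' ℝ)
  rw [← sum_diag]
  simp only [Finset.mul_sum]
  gcongr with i _ j _
  exact two_mul_norm_apply_le_of_posSemidef hA i j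

end PosSemidef

lemma summable_prod_apply_of_nonneg {ι : Type*} [Fintype ι] {κ : ι → Type*}
    {f : ∀ i, κ i → ℝ} (hf : ∀ i, Summable (f i)) (hf₀ : ∀ i k, 0 ≤ f i k) :
    Summable fun x : ∀ i, κ i ↦ ∏ i, f i (x i) := by
  classical
  refine summable_of_sum_le (c := ∏ i, ∑' k, f i k)
    (fun x ↦ Finset.prod_nonneg fun i _ ↦ hf₀ i (x i)) fun s ↦ ?_
  -- A finite set of points is contained in the box spanned by its projections.
  let box (i : ι) : Finset (κ i) := s.image (· i)
  have subset_box : s ⊆ Fintype.piFinset box := fun x hx ↦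
    Fintype.mem_piFinset.mpr fun i ↦ Finset.mem_image_of_mem (· i) hx
  calc ∑ x ∈ s, ∏ i, f i (x i)
      ≤ ∑ x ∈ Fintype.piFinset box, ∏ i, f i (x i) :=
        Finset.sum_le_sum_of_subset_of_nonneg subset_box
          fun x _ _ ↦ Finset.prod_nonneg fun i _ ↦ hf₀ i (x i)
    _ = ∏ i, ∑ k ∈ box i, f i k := (Finset.prod_univ_sum box f).symm
    _ ≤ ∏ i, ∑' k, f i k :=
        Finset.prod_le_prod (fun i _ ↦ Finset.sum_nonneg fun k _ ↦ hf₀ i k)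
          fun i _ ↦ (hf i).sum_le_tsum _ fun k _ ↦ hf₀ i k

lemma summable_exp_neg_mul_abs_int {c : ℝ} (hc : 0 < c) :
    Summable fun k : ℤ ↦ exp (-c * |(k : ℝ)|) := by
  have summable_nat : Summable fun k : ℕ ↦ exp (-c * k) := by
    simpa only [mul_comm] using summable_exp_nat_mul_iff.mpr (neg_lt_zero.mpr hc)
  exact .of_nat_of_neg (by simpa using summable_nat) (by simpa using summable_nat)

lemma summable_exp_neg_mul_sum_abs_int {ι : Type*} [Fintype ι] {c : ℝ} (hc : 0 < c) :
    Summable fun x : ι → ℤ ↦ exp (-c * ∑ i, |(x i : ℝ)|) := by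
  simpa only [Finset.mul_sum, exp_sum] using
    summable_prod_apply_of_nonneg (fun _ : ι ↦ summable_exp_neg_mul_abs_int hc)
      fun _ _ ↦ (exp_pos _).le

lemma summable_exp_neg_mul_sum_abs_intMatrix {m n : Type*} [Fintype m] [Fintype n] {c : ℝ}
    (hc : 0 < c) :
    Summable fun T : Matrix m n ℤ ↦ exp (-c * ∑ i, ∑ j, |(T i j : ℝ)|) :=
  ((summable_exp_neg_mul_sum_abs_int hc).comp_injective
    (Equiv.curry m n ℤ).symm.injective).congr fun _ ↦
      congrArg (fun s ↦ exp (-c * s)) (Fintype.sum_prod_type _)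

theorem summable_exp_neg_trace_posSemidef_general {ι : Type*} [Fintype ι] {c : ℝ} (hc : 0 < c) :
    Summable fun T : {T : Matrix ι ι ℤ // (T.map (Int.cast : ℤ → ℝ)).PosSemidef} ↦
      exp (-c * (T.1.map (Int.cast : ℤ → ℝ)).trace) := by
  obtain ⟨b, hb, hbc⟩ : ∃ b > 0, Fintype.card ι * b < c := exists_pos_mul_lt hc _
  refine .of_nonneg_of_le (fun _ ↦ (exp_pos _).le) (fun ⟨T, hT⟩ ↦ ?_)
    ((summable_exp_neg_mul_sum_abs_intMatrix (m := ι) (n := ι) hb).comp_injective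
      Subtype.val_injective)
  have sum_abs_le : ∑ i, ∑ j, |(T i j : ℝ)| ≤
      Fintype.card ι * (T.map (Int.cast : ℤ → ℝ)).trace :=
    sum_norm_le_card_mul_re_trace_of_posSemidef hT
  refine exp_le_exp.mpr ?_
  rw [neg_mul, neg_mul, neg_le_neg_iff]
  calc b * ∑ i, ∑ j, |(T i j : ℝ)|
      ≤ b * (Fintype.card ι * (T.map (Int.cast : ℤ → ℝ)).trace) := by gcongr
    _ = Fintype.card ι * b * (T.map (Int.cast : ℤ → ℝ)).trace := by ring
    _ ≤ c * (T.map (Int.cast : ℤ → ℝ)).trace := by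
      gcongr
      exact hT.trace_nonneg

/-- The series `∑_S e^{-δπ Tr(S)}`, over positive semidefinite symmetric `n × n`
matrices `S` with entries in `(1/N)ℤ`, converges. Writing `S = T / N` with `T` an
integer matrix, this says that `T ↦ exp (-δ * π * Tr T / N)` is summable over the
set of symmetric positive semidefinite integer matrices `T`. -/
theorem summable_exp_neg_trace_posSemidef
    (n N : ℕ) (hn : 0 < n) (hN : 0 < N) (δ : ℝ) (hδ : 0 < δ) :
    Summable (fun T : {T : Matrix (Fin n) (Fin n) ℤ //
        T.IsSymm ∧ (T.map (Int.cast : ℤ → ℝ)).PosSemidef} =>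
      Real.exp (-δ * π * ((T.1.map (Int.cast : ℤ → ℝ)).trace) / N)) := by
  have hc : 0 < δ * π / N := by positivity
  exact ((summable_exp_neg_trace_posSemidef_general hc).comp_injective
    (Subtype.map_injective (fun _ ↦ And.right) Function.injective_id)).congr
      fun T ↦ congrArg exp (by simp only [Subtype.map]; ring)
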